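/- arXiv:1411.0363 — 2 statements merged into one kernel-verified Lean document; each statement's English description precedes it below -/
import Mathlib

section
/- Let {U_λ}_{λ∈Λ} be a family of domains of holomorphy in ℂⁿ, and let U be a connected component of the interior of ⋂_{λ∈Λ} U_λ. Then U is a domain of holomorphy. -/
open Set Metric Filter Topology

/-- A function `f`, holomorphic on the open set `U ⊆ ℂⁿ`, extends holomorphically to a point
`a`: there is a connected open neighbourhood `V` of `a` and a holomorphic `g` on `V` agreeing
with `f` on a nonempty open subset of `U ∩ V`. -/
def ExtendsHolomorphicallyTo {n : ℕ} (U : Set (Fin n → ℂ)) (f : (Fin n → ℂ) → ℂ)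
    (a : Fin n → ℂ) : Prop :=
  ∃ V : Set (Fin n → ℂ), IsOpen V ∧ IsConnected V ∧ a ∈ V ∧
    ∃ g : (Fin n → ℂ) → ℂ, DifferentiableOn ℂ g V ∧
      ∃ W : Set (Fin n → ℂ), IsOpen W ∧ W.Nonempty ∧ W ⊆ U ∩ V ∧ Set.EqOn f g W

/-- `U ⊆ ℂⁿ` is a domain of holomorphy: it is a domain (connected open set) and there exists a
holomorphic function on `U` which does not extend holomorphically to any point of `Uᶜ`. -/
def IsDomainOfHolomorphy {n : ℕ} (U : Set (Fin n → ℂ)) : Prop :=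
  IsOpen U ∧ IsConnected U ∧
    ∃ f : (Fin n → ℂ) → ℂ, DifferentiableOn ℂ f U ∧
      ∀ a ∈ Uᶜ, ¬ ExtendsHolomorphicallyTo U f a

/-!
For open `Ω` in a finite-dimensional space, the holomorphic maps on `Ω` form a Fréchet space. Given
open sets `W ⊆ Ω ∩ D`, those that agree on `W` with a bounded holomorphic map on `D` form a linear
subspace. By Montel's theorem it is a countable union of closed sets, hence meagre as soon as it is
proper. If it is proper whenever `D` is connected and not contained in `Ω`, the Baire category
theorem, applied to the pairs `(W, D)` from a countable basis, yields one map outside all these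
subspaces. Such a map does not extend to any point outside `Ω`: by the identity theorem, an
extension to a connected set leaving `Ω` still agrees with the map arbitrarily close to some point
`b ∉ Ω`, and it is bounded on a small neighbourhood of `b`.

If `Ω` is a component of the interior of `⋂ l, U l`, a connected open set `D` that meets `Ω` but is
not contained in it has a point outside some `U l`. A function on `U l` that does not extend to that
point shows that the subspace for `(W, D)` is proper.
-/

/-- The geometric data of an extension across the boundary of `Ω`: a connected open set `D` that
leaves `Ω`, and a nonempty open set `W ⊆ Ω ∩ D` on which the extension agrees with the map. -/
structure IsCrossingPair {X : Type*} [TopologicalSpace X] (Ω W D : Set X) : Prop where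
  isOpen_right : IsOpen D
  isPreconnected_right : IsPreconnected D
  not_right_subset : ¬ D ⊆ Ω
  isOpen_left : IsOpen W
  nonempty_left : W.Nonempty
  left_subset : W ⊆ Ω
  left_subset_right : W ⊆ D

namespace IsCrossingPair

variable {X : Type*} [TopologicalSpace X] {Ω W D : Set X}

lemma of_subset {Ω' : Set X} (h : IsCrossingPair Ω W D) (hΩ : Ω ⊆ Ω')
    (hD : ¬ D ⊆ Ω') : IsCrossingPair Ω' W D :=
  { h with not_right_subset := hD, left_subset := h.left_subset.trans hΩ }

lemma exists_not_subset_of_connectedComponentIn {ι : Type*} {U : ι → Set X} {x : X}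
    (h : IsCrossingPair (connectedComponentIn (interior (⋂ l, U l)) x) W D) :
    ∃ l, ¬ D ⊆ U l := by
  by_contra! hDU
  obtain ⟨z, hz⟩ := h.nonempty_left
  refine h.not_right_subset (connectedComponentIn_eq (h.left_subset hz) ▸
    h.isPreconnected_right.subset_connectedComponentIn (h.left_subset_right hz) ?_)
  exact interior_maximal (subset_iInter hDU) h.isOpen_right

end IsCrossingPair

section NormedSpace

variable {E F : Type*} [NormedAddCommGroup E] [NormedSpace ℂ E]
  [NormedAddCommGroup F] [NormedSpace ℂ F]

section Identity

variable [CompleteSpace F] {f g : E → F} {s t : Set E}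

lemma eqOn_of_convex_of_eventuallyEq (hs : IsOpen s) (hc : Convex ℝ s)
    (hf : DifferentiableOn ℂ f s) (hg : DifferentiableOn ℂ g s) {x : E} (hx : x ∈ s)
    (hfg : f =ᶠ[𝓝 x] g) : EqOn f g s := by
  intro y hy
  let line : ℂ → E := fun ζ => x + ζ • (y - x)
  have line_diff : Differentiable ℂ line := by fun_prop
  have line_zero : line 0 = x := by simp [line]
  have line_one : line 1 = y := by simp [line]
  have isOpen_preimage : IsOpen (line ⁻¹' s) := hs.preimage line_diff.continuous
  have isPreconnected_preimage : IsPreconnected (line ⁻¹' s) :=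
    ((hc.translate_preimage_right x).linear_preimage
      ((LinearMap.toSpanSingleton ℂ E (y - x)).restrictScalars ℝ)).isPreconnected
  have analytic {h : E → F} (hh : DifferentiableOn ℂ h s) :
      AnalyticOnNhd ℂ (h ∘ line) (line ⁻¹' s) :=
    (hh.comp line_diff.differentiableOn (mapsTo_preimage line s)).analyticOnNhd isOpen_preimage
  have eventuallyEq : f ∘ line =ᶠ[𝓝 0] g ∘ line :=
    (line_diff.continuous.tendsto' 0 x line_zero).eventually hfg
  simpa [line_one] using (analytic hf).eqOn_of_preconnected_of_eventuallyEq (analytic hg)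
    isPreconnected_preimage (by simpa [line_zero] using hx) eventuallyEq
    (show (1 : ℂ) ∈ line ⁻¹' s by simpa [line_one] using hy)

lemma eventuallyEq_of_mem_closure (hs : IsOpen s) (hf : DifferentiableOn ℂ f s)
    (hg : DifferentiableOn ℂ g s) {z : E} (hz : z ∈ s)
    (hzcl : z ∈ closure {y | f =ᶠ[𝓝 y] g}) : f =ᶠ[𝓝 z] g := by
  obtain ⟨r, hr, hrs⟩ := Metric.isOpen_iff.1 hs z hz
  obtain ⟨y, hy, hfg⟩ := mem_closure_iff.1 hzcl _ isOpen_ball (mem_ball_self hr)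
  have hEq := eqOn_of_convex_of_eventuallyEq isOpen_ball (convex_ball z r) (hf.mono hrs)
    (hg.mono hrs) hy hfg
  exact hEq.eventuallyEq_of_mem (ball_mem_nhds z hr)

lemma exists_notMem_mem_closure_eventuallyEq (hs : IsOpen s) (ht : IsOpen t)
    (htc : IsPreconnected t) (hts : ¬ t ⊆ s) (hf : DifferentiableOn ℂ f s)
    (hg : DifferentiableOn ℂ g t) {x : E} (hx : x ∈ s ∩ t) (hfg : f =ᶠ[𝓝 x] g) :
    ∃ b ∈ t, b ∉ s ∧ b ∈ closure {z ∈ s ∩ t | f =ᶠ[𝓝 z] g} := by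
  by_contra! hcon
  have hopen : IsOpen {z ∈ s ∩ t | f =ᶠ[𝓝 z] g} :=
    (hs.inter ht).inter isOpen_setOfPred_eventually_nhds
  refine hts ((htc.subset_of_closure_inter_subset hopen ⟨x, hx.2, hx, hfg⟩ ?_).trans
    fun z hz => hz.1.1)
  rintro b ⟨hb, hbt⟩
  have hbs : b ∈ s := by_contra fun hbs => hcon b hbt hbs hb
  exact ⟨⟨hbs, hbt⟩, eventuallyEq_of_mem_closure (hs.inter ht) (hf.mono inter_subset_left)
    (hg.mono inter_subset_right) ⟨hbs, hbt⟩ (closure_mono (fun z hz => hz.2) hb)⟩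

end Identity

section Weierstrass

variable {ι : Type*} {l : Filter ι} {f : ι → E → F} {g : E → F} {s : Set E}

lemma tendstoUniformlyOn_fderiv_zero {δ : ℝ} (hδ : 0 < δ)
    (hf : ∀ i, DifferentiableOn ℂ (f i) (thickening δ s))
    (hlim : TendstoUniformlyOn f 0 l (thickening δ s)) :
    TendstoUniformlyOn (fun i => fderiv ℂ (f i)) 0 l s := by
  rw [Metric.tendstoUniformlyOn_iff] at hlim ⊢
  intro ε hε
  filter_upwards [hlim (δ * ε / 4) (by positivity)] with i hi z hz
  have hball : ball z δ ⊆ thickening δ s := ball_subset_thickening hz δ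
  have hsmall : ∀ y ∈ ball z δ, ‖f i y‖ ≤ δ * ε / 4 := fun y hy => by
    simpa using (hi y (hball hy)).le
  have hmaps : MapsTo (f i) (ball z δ) (closedBall (f i z) (δ * ε / 2)) := fun y hy => by
    rw [mem_closedBall, dist_eq_norm]
    linarith [norm_sub_le (f i y) (f i z), hsmall y hy, hsmall z (mem_ball_self hδ)]
  calc dist ((0 : E → E →L[ℂ] F) z) (fderiv ℂ (f i) z) = ‖fderiv ℂ (f i) z‖ := by simp
    _ ≤ δ * ε / 2 / δ :=
      Complex.norm_fderiv_le_div_of_mapsTo_ball ((hf i).mono hball) hmaps hδ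
    _ = ε / 2 := by field_simp
    _ < ε := half_lt_self hε

lemma uniformCauchySeqOn_fderiv {δ : ℝ} (hδ : 0 < δ)
    (hf : ∀ i, DifferentiableOn ℂ (f i) (thickening δ s))
    (hcauchy : UniformCauchySeqOn f l (thickening δ s)) :
    UniformCauchySeqOn (fun i => fderiv ℂ (f i)) l s := by
  rw [SeminormedAddGroup.uniformCauchySeqOn_iff_tendstoUniformlyOn_zero] at hcauchy ⊢
  refine (tendstoUniformlyOn_fderiv_zero hδ (fun i => (hf i.1).neg.add (hf i.2)) hcauchy).congr
    (Eventually.of_forall fun i z hz => ?_)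
  have hdiff (j : ι) : DifferentiableAt ℂ (f j) z :=
    (hf j).differentiableAt (isOpen_thickening.mem_nhds (self_subset_thickening hδ s hz))
  exact (fderiv_add (hdiff i.1).neg (hdiff i.2)).trans (congrArg (· + _) fderiv_neg)

theorem differentiableOn_of_tendstoLocallyUniformlyOn [LocallyCompactSpace E] [CompleteSpace F]
    [l.NeBot] (hs : IsOpen s) (hlim : TendstoLocallyUniformlyOn f g l s)
    (hf : ∀ i, DifferentiableOn ℂ (f i) s) :
    DifferentiableOn ℂ g s := by
  intro z hz
  obtain ⟨K, hK, hzK, hKs⟩ := exists_compact_subset hs hz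
  have hlimK := (tendstoLocallyUniformlyOn_iff_forall_isCompact hs).1 hlim K hKs hK
  obtain ⟨r, hr, hrK⟩ := Metric.mem_nhds_iff.1 (mem_interior_iff_mem_nhds.1 hzK)
  have hthick : thickening (r / 2) (ball z (r / 2)) ⊆ K :=
    (Metric.thickening_ball z (r / 2) (r / 2)).trans (by rwa [add_halves])
  have hball : ball z (r / 2) ⊆ K := (self_subset_thickening (half_pos hr) _).trans hthick
  have hcauchy : UniformCauchySeqOn (fun i => fderiv ℂ (f i)) l (ball z (r / 2)) :=
    uniformCauchySeqOn_fderiv (half_pos hr)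
      (fun i => (hf i).mono (hthick.trans hKs))
      (hlimK.uniformCauchySeqOn.mono hthick)
  choose! f' hf' using fun y hy =>
    cauchy_map_iff_exists_tendsto.1 (hcauchy.cauchy_map (x := y) hy)
  refine (hasFDerivAt_of_tendstoUniformlyOn isOpen_ball
    (hcauchy.tendstoUniformlyOn_of_tendsto hf')
    (fun i y hy => ((hf i).differentiableAt (hs.mem_nhds (hKs (hball hy)))).hasFDerivAt)
    (fun y hy => hlimK.tendsto_at (hball hy))
    (mem_ball_self (half_pos hr))).differentiableAt.differentiableWithinAt

end Weierstrass

section FunctionSpaces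

variable {Ω D W : Set E}

/-- The holomorphic maps `Ω → F`, inside the continuous maps with the compact-open topology, which
is that of locally uniform convergence. Differentiability is that of an extension to `E`. -/
def holomorphicMaps (F : Type*) [NormedAddCommGroup F] [NormedSpace ℂ F] (Ω : Set E) :
    Submodule ℂ C(Ω, F) where
  carrier := {f | ∃ g : E → F, DifferentiableOn ℂ g Ω ∧ ∀ z : Ω, f z = g z}
  zero_mem' := ⟨0, differentiableOn_const 0, fun _ => rfl⟩
  add_mem' := by
    rintro f₁ f₂ ⟨g₁, hg₁, h₁⟩ ⟨g₂, hg₂, h₂⟩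
    exact ⟨g₁ + g₂, hg₁.add hg₂, fun z => congrArg₂ (· + ·) (h₁ z) (h₂ z)⟩
  smul_mem' := by
    rintro c f ⟨g, hg, h⟩
    exact ⟨c • g, hg.const_smul c, fun z => congrArg (c • ·) (h z)⟩

lemma isClosed_holomorphicMaps [LocallyCompactSpace E] [CompleteSpace F] (hΩ : IsOpen Ω) :
    IsClosed (holomorphicMaps F Ω : Set C(Ω, F)) := by
  have := hΩ.locallyCompactSpace
  refine isClosed_of_closure_subset fun f hf => ?_
  have := mem_closure_iff_comap_neBot.1 hf
  choose g hg hfg using fun h : holomorphicMaps F Ω => h.2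
  let f₀ : E → F := Function.extend Subtype.val f 0
  have hf₀ (z : Ω) : f₀ z = f z := Subtype.val_injective.extend_apply _ _ z
  have hlim : TendstoLocallyUniformlyOn g f₀ (comap (↑) (𝓝 f)) Ω := by
    rw [tendstoLocallyUniformlyOn_iff_tendstoLocallyUniformly_comp_coe]
    have htends := ContinuousMap.tendsto_iff_tendstoLocallyUniformly.1
      (tendsto_comap (f := ((↑) : holomorphicMaps F Ω → C(Ω, F))) (x := 𝓝 f))
    convert htends using 1
    · ext h z
      exact (hfg h z).symm
    · exact funext hf₀
  exact ⟨f₀, differentiableOn_of_tendstoLocallyUniformlyOn hΩ hlim hg, fun z => (hf₀ z).symm⟩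

lemma baireSpace_holomorphicMaps [ProperSpace E] [CompleteSpace F] (hΩ : IsOpen Ω) :
    BaireSpace (holomorphicMaps F Ω) := by
  have := hΩ.locallyCompactSpace
  have : IsCountablyGenerated (uniformity (holomorphicMaps F Ω)) :=
    inferInstanceAs (IsCountablyGenerated (comap _ (uniformity C(Ω, F))))
  have : CompleteSpace (holomorphicMaps F Ω) :=
    (isClosed_holomorphicMaps (F := F) hΩ).completeSpace_coe
  infer_instance

/-- The holomorphic maps `D → F` whose norm is at most `M`. -/
def holomorphicMapsBoundedBy (F : Type*) [NormedAddCommGroup F] [NormedSpace ℂ F] (D : Set E)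
    (M : ℝ) : Set C(D, F) :=
  {f ∈ holomorphicMaps F D | ∀ z, ‖f z‖ ≤ M}

lemma isClosed_holomorphicMapsBoundedBy [LocallyCompactSpace E] [CompleteSpace F] (hD : IsOpen D)
    (M : ℝ) : IsClosed (holomorphicMapsBoundedBy F D M) := by
  simp only [holomorphicMapsBoundedBy, ofPred_and, ofPred_forall]
  exact (isClosed_holomorphicMaps hD).inter
    (isClosed_iInter fun z => isClosed_le (by fun_prop) continuous_const)

lemma equicontinuous_holomorphicMapsBoundedBy (hD : IsOpen D) (M : ℝ) :
    Equicontinuous fun (f : holomorphicMapsBoundedBy F D M) (z : D) => (f : C(D, F)) z := by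
  intro z
  obtain ⟨r, hr, hrD⟩ := Metric.isOpen_iff.1 hD z z.2
  have hlim : Tendsto (fun y : D => 2 * M / r * dist (y : E) z) (𝓝 z) (𝓝 0) := by
    have : Continuous fun y : D => 2 * M / r * dist (y : E) z := by fun_prop
    exact this.tendsto' z 0 (by simp)
  refine Metric.equicontinuousAt_of_continuity_modulus _ hlim _ ?_
  filter_upwards [ball_mem_nhds z hr] with y hy ⟨f, ⟨g, hg, hfg⟩, hM⟩
  have hmaps : MapsTo g (ball z r) (closedBall (g z) (2 * M)) := fun w hw => by
    have hgM (u : D) : ‖g u‖ ≤ M := hfg u ▸ hM u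
    rw [mem_closedBall, dist_eq_norm]
    linarith [norm_sub_le (g w) (g z), hgM ⟨w, hrD hw⟩, hgM z]
  simpa only [hfg, dist_comm (g z)] using
    Complex.dist_le_div_mul_dist_of_mapsTo_ball (hg.mono hrD) hmaps hy

theorem isCompact_holomorphicMapsBoundedBy [LocallyCompactSpace E] [ProperSpace F] (hD : IsOpen D)
    (M : ℝ) : IsCompact (holomorphicMapsBoundedBy F D M) := by
  have := hD.locallyCompactSpace
  have : T2Space (UniformOnFun D F {K | IsCompact K}) :=
    UniformOnFun.t2Space_of_covering sUnion_isCompact_eq_univ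
  rw [← (isClosed_holomorphicMapsBoundedBy hD M).closure_eq]
  exact ArzelaAscoli.isCompact_closure_of_isClosedEmbedding (fun _ hK => hK)
    ContinuousMap.isUniformEmbedding_toUniformOnFunIsCompact.isClosedEmbedding
    (fun K _ => (equicontinuous_holomorphicMapsBoundedBy hD M).equicontinuousOn K)
    (fun _ _ z _ => ⟨closedBall 0 M, isCompact_closedBall 0 M,
      fun f hf => mem_closedBall_zero_iff.2 (hf.2 z)⟩)

/-- The bounded holomorphic maps `D → F`. -/
def boundedHolomorphicMaps (F : Type*) [NormedAddCommGroup F] [NormedSpace ℂ F] (D : Set E) :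
    Submodule ℂ C(D, F) where
  carrier := {f | ∃ M, f ∈ holomorphicMapsBoundedBy F D M}
  zero_mem' := ⟨0, zero_mem _, fun z => by simp⟩
  add_mem' := by
    rintro f g ⟨M, hf, hM⟩ ⟨N, hg, hN⟩
    exact ⟨M + N, add_mem hf hg, fun z => norm_add_le_of_le (hM z) (hN z)⟩
  smul_mem' := by
    rintro c f ⟨M, hf, hM⟩
    exact ⟨‖c‖ * M, Submodule.smul_mem _ c hf, fun z =>
      (norm_smul_le c (f z)).trans (by gcongr; exact hM z)⟩

/-- The holomorphic maps on `Ω` that agree on `W` with a bounded holomorphic map on `D`. -/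
def boundedlyExtendableMaps (F : Type*) [NormedAddCommGroup F] [NormedSpace ℂ F]
    (hΩ : W ⊆ Ω) (hD : W ⊆ D) : Submodule ℂ (holomorphicMaps F Ω) :=
  ((boundedHolomorphicMaps F D).map
      (ContinuousMap.compCLM ℂ F (ContinuousMap.inclusion hD)).toLinearMap).comap
    ((ContinuousMap.compCLM ℂ F (ContinuousMap.inclusion hΩ)).toLinearMap ∘ₗ
      (holomorphicMaps F Ω).subtype)

lemma mem_boundedlyExtendableMaps {hΩ : W ⊆ Ω} {hD : W ⊆ D} {f : holomorphicMaps F Ω} :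
    f ∈ boundedlyExtendableMaps F hΩ hD ↔ ∃ g ∈ boundedHolomorphicMaps F D,
      ∀ z (hz : z ∈ W), g ⟨z, hD hz⟩ = (f : C(Ω, F)) ⟨z, hΩ hz⟩ := by
  simp [boundedlyExtendableMaps, Submodule.mem_map, ContinuousMap.ext_iff,
    ContinuousMap.inclusion]

lemma boundedlyExtendableMaps_eq_iUnion (hΩ : W ⊆ Ω) (hD : W ⊆ D) :
    (boundedlyExtendableMaps F hΩ hD : Set (holomorphicMaps F Ω)) = ⋃ N : ℕ,
      (fun f : holomorphicMaps F Ω => (f : C(Ω, F)).comp (ContinuousMap.inclusion hΩ)) ⁻¹'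
        ((fun g => g.comp (ContinuousMap.inclusion hD)) '' holomorphicMapsBoundedBy F D N) := by
  ext f
  simp only [mem_iUnion]
  constructor
  · rintro ⟨g, ⟨M, hg, hM⟩, hgf⟩
    obtain ⟨N, hN⟩ := exists_nat_ge M
    exact ⟨N, g, ⟨hg, fun z => (hM z).trans hN⟩, hgf⟩
  · rintro ⟨N, g, hg, hgf⟩
    exact ⟨g, ⟨N, hg⟩, hgf⟩

lemma isMeagre_of_ne_top_of_eq_iUnion_isClosed {𝕜 V ι : Type*} [NontriviallyNormedField 𝕜]
    [AddCommGroup V] [TopologicalSpace V] [ContinuousAdd V] [Module 𝕜 V] [ContinuousSMul 𝕜 V]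
    [Countable ι] {p : Submodule 𝕜 V} (hp : p ≠ ⊤) {A : ι → Set V} (hA : ∀ i, IsClosed (A i))
    (hpA : (p : Set V) = ⋃ i, A i) : IsMeagre (p : Set V) := by
  rw [hpA]
  refine isMeagre_iUnion fun i => ((hA i).isNowhereDense_iff.2 ?_).isMeagre
  by_contra hne
  refine hp (p.eq_top_of_nonempty_interior' ((nonempty_iff_ne_empty.2 hne).mono ?_))
  exact interior_mono (hpA ▸ subset_iUnion A i)

theorem isMeagre_boundedlyExtendableMaps [LocallyCompactSpace E] [ProperSpace F] (hDo : IsOpen D)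
    {hΩ : W ⊆ Ω} {hD : W ⊆ D} (hne : boundedlyExtendableMaps F hΩ hD ≠ ⊤) :
    IsMeagre (boundedlyExtendableMaps F hΩ hD : Set (holomorphicMaps F Ω)) := by
  refine isMeagre_of_ne_top_of_eq_iUnion_isClosed hne (ι := ℕ) (fun N => ?_)
    (boundedlyExtendableMaps_eq_iUnion hΩ hD)
  exact ((isCompact_holomorphicMapsBoundedBy hDo N).image
    (ContinuousMap.continuous_precomp _)).isClosed.preimage
      ((ContinuousMap.continuous_precomp _).comp continuous_subtype_val)

end FunctionSpaces

section Extension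

variable {f g : E → F} {Ω W D V : Set E}

/-- There is a holomorphic map on `D` that agrees with `f` on `W`. -/
def HasHolomorphicExtension (f : E → F) (W D : Set E) : Prop :=
  ∃ g : E → F, DifferentiableOn ℂ g D ∧ EqOn f g W

lemma exists_mem_holomorphicMaps_forall_apply_eq (hf : DifferentiableOn ℂ f Ω) :
    ∃ f' : C(Ω, F), f' ∈ holomorphicMaps F Ω ∧ ∀ z : Ω, f' z = f z :=
  ⟨⟨fun z => f z, hf.continuousOn.domRestrict⟩, ⟨f, hf, fun _ => rfl⟩, fun _ => rfl⟩

lemma boundedlyExtendableMaps_ne_top (hΩ : W ⊆ Ω) (hD : W ⊆ D) (hf : DifferentiableOn ℂ f Ω)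
    (hext : ¬ HasHolomorphicExtension f W D) : boundedlyExtendableMaps F hΩ hD ≠ ⊤ := by
  intro htop
  obtain ⟨f', hf', hff'⟩ := exists_mem_holomorphicMaps_forall_apply_eq hf
  have hmem : ⟨f', hf'⟩ ∈ boundedlyExtendableMaps F hΩ hD := htop ▸ Submodule.mem_top
  obtain ⟨h, ⟨-, ⟨g, hg, hhg⟩, -⟩, hhf⟩ := mem_boundedlyExtendableMaps.1 hmem
  exact hext ⟨g, hg, fun z hz => by rw [← hff' ⟨z, hΩ hz⟩, ← hhf z hz, hhg]⟩

lemma mem_boundedlyExtendableMaps_of_eqOn {hΩ : W ⊆ Ω} {hD : W ⊆ D} {f' : holomorphicMaps F Ω}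
    (hf' : ∀ z : Ω, (f' : C(Ω, F)) z = f z) (hg : DifferentiableOn ℂ g D)
    (hgbdd : ∃ M, ∀ z ∈ D, ‖g z‖ ≤ M) (hfg : EqOn f g W) :
    f' ∈ boundedlyExtendableMaps F hΩ hD := by
  obtain ⟨M, hM⟩ := hgbdd
  obtain ⟨g', hg', hgg'⟩ := exists_mem_holomorphicMaps_forall_apply_eq hg
  refine mem_boundedlyExtendableMaps.2 ⟨g', ⟨M, hg', fun z => ?_⟩, fun z hz => ?_⟩
  · exact hgg' z ▸ hM z z.2
  · rw [hgg', hf', hfg hz]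

lemma exists_isCrossingPair_mem_basis_bounded [LocallyCompactSpace E] [CompleteSpace F]
    {B : Set (Set E)} (hB : TopologicalSpace.IsTopologicalBasis B)
    (hBc : ∀ s ∈ B, IsPreconnected s) (hΩ : IsOpen Ω) (hWV : IsCrossingPair Ω W V)
    (hf : DifferentiableOn ℂ f Ω) (hg : DifferentiableOn ℂ g V) (hfg : EqOn f g W) :
    ∃ W' ∈ B, ∃ D ∈ B, IsCrossingPair Ω W' D ∧ D ⊆ V ∧ (∃ M, ∀ z ∈ D, ‖g z‖ ≤ M) ∧
      EqOn f g W' := by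
  obtain ⟨x, hx⟩ := hWV.nonempty_left
  obtain ⟨b, hbV, hbΩ, hb⟩ := exists_notMem_mem_closure_eventuallyEq hΩ hWV.isOpen_right
    hWV.isPreconnected_right hWV.not_right_subset hf hg
    ⟨hWV.left_subset hx, hWV.left_subset_right hx⟩
    (hfg.eventuallyEq_of_mem (hWV.isOpen_left.mem_nhds hx))
  obtain ⟨K, hK, hbK, hKV⟩ := exists_compact_subset hWV.isOpen_right hbV
  obtain ⟨D, hDB, hbD, hDK⟩ := hB.exists_subset_of_mem_open hbK isOpen_interior
  have hDK' : D ⊆ K := hDK.trans interior_subset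
  obtain ⟨M, hM⟩ := hK.exists_bound_of_continuousOn (hg.continuousOn.mono hKV)
  obtain ⟨z, hzD, ⟨hzΩ, -⟩, hfgz⟩ := mem_closure_iff.1 hb D (hB.isOpen hDB) hbD
  obtain ⟨W', hW'B, hzW', hW'⟩ := hB.mem_nhds_iff.1
    (inter_mem (inter_mem (hΩ.mem_nhds hzΩ) ((hB.isOpen hDB).mem_nhds hzD)) hfgz)
  exact ⟨W', hW'B, D, hDB,
    { isOpen_right := hB.isOpen hDB
      isPreconnected_right := hBc D hDB
      not_right_subset := fun hD => hbΩ (hD hbD)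
      isOpen_left := hB.isOpen hW'B
      nonempty_left := ⟨z, hzW'⟩
      left_subset := fun y hy => (hW' hy).1.1
      left_subset_right := fun y hy => (hW' hy).1.2 },
    hDK'.trans hKV, ⟨M, fun y hy => hM y (hDK' hy)⟩, fun y hy => (hW' hy).2⟩

theorem exists_forall_not_hasHolomorphicExtension [ProperSpace E] [ProperSpace F] (hΩ : IsOpen Ω)
    (h : ∀ W D, IsCrossingPair Ω W D →
      ∃ f : E → F, DifferentiableOn ℂ f Ω ∧ ¬ HasHolomorphicExtension f W D) :
    ∃ f : E → F, DifferentiableOn ℂ f Ω ∧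
      ∀ W D, IsCrossingPair Ω W D → ¬ HasHolomorphicExtension f W D := by
  obtain ⟨B, hBsub, hBcount, hB⟩ :=
    (TopologicalSpace.IsTopologicalBasis.isOpen_isPreconnected (α := E)).exists_countable
  let pairs := {p : B × B | IsCrossingPair Ω (p.1 : Set E) p.2}
  have := hBcount.to_subtype
  let bad (p : pairs) : Submodule ℂ (holomorphicMaps F Ω) :=
    boundedlyExtendableMaps F p.2.left_subset p.2.left_subset_right
  have hbad (p : pairs) : IsMeagre (bad p : Set (holomorphicMaps F Ω)) := by
    obtain ⟨f, hf, hfext⟩ := h _ _ p.2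
    exact isMeagre_boundedlyExtendableMaps p.2.isOpen_right
      (boundedlyExtendableMaps_ne_top _ _ hf hfext)
  have := baireSpace_holomorphicMaps (F := F) hΩ
  obtain ⟨⟨f', f, hf, hff'⟩, hfbad⟩ := (dense_of_mem_residual (isMeagre_iUnion hbad)).nonempty
  refine ⟨f, hf, ?_⟩
  rintro W V hWV ⟨g, hg, hfg⟩
  obtain ⟨W', hW', D, hD, hpair, hDV, hgbdd, hfg'⟩ := exists_isCrossingPair_mem_basis_bounded hB
    (fun s hs => (hBsub hs).2) hΩ hWV hf hg hfg
  exact hfbad (mem_iUnion.2 ⟨⟨(⟨W', hW'⟩, ⟨D, hD⟩), hpair⟩,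
    mem_boundedlyExtendableMaps_of_eqOn hff' (hg.mono hDV) hgbdd hfg'⟩)

end Extension

end NormedSpace

lemma extendsHolomorphicallyTo_iff_exists_isCrossingPair {n : ℕ} {Ω : Set (Fin n → ℂ)}
    {f : (Fin n → ℂ) → ℂ} {a : Fin n → ℂ} (ha : a ∉ Ω) :
    ExtendsHolomorphicallyTo Ω f a ↔
      ∃ W D, IsCrossingPair Ω W D ∧ a ∈ D ∧ HasHolomorphicExtension f W D := by
  constructor
  · rintro ⟨D, hD, hDc, haD, g, hg, W, hW, hWne, hWsub, hfg⟩
    exact ⟨W, D, ⟨hD, hDc.isPreconnected, fun h => ha (h haD), hW, hWne,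
      hWsub.trans inter_subset_left, hWsub.trans inter_subset_right⟩, haD, g, hg, hfg⟩
  · rintro ⟨W, D, hWD, haD, g, hg, hfg⟩
    exact ⟨D, hWD.isOpen_right, ⟨⟨a, haD⟩, hWD.isPreconnected_right⟩, haD, g, hg, W,
      hWD.isOpen_left, hWD.nonempty_left, subset_inter hWD.left_subset hWD.left_subset_right, hfg⟩

theorem component_of_interior_iInter_isDomainOfHolomorphy_general {n : ℕ} {ι : Type*}
    (U : ι → Set (Fin n → ℂ))
    (hU : ∀ l, ∀ a ∈ (U l)ᶜ, ∃ f : (Fin n → ℂ) → ℂ,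
      DifferentiableOn ℂ f (U l) ∧ ¬ ExtendsHolomorphicallyTo (U l) f a)
    (x : Fin n → ℂ) (hx : x ∈ interior (⋂ l, U l)) :
    IsDomainOfHolomorphy (connectedComponentIn (interior (⋂ l, U l)) x) := by
  set Ω := connectedComponentIn (interior (⋂ l, U l)) x
  have hΩ : IsOpen Ω := isOpen_interior.connectedComponentIn
  have hΩU (l : ι) : Ω ⊆ U l :=
    (connectedComponentIn_subset _ _).trans (interior_subset.trans (iInter_subset U l))
  have hpair (W D) (hWD : IsCrossingPair Ω W D) : ∃ f : (Fin n → ℂ) → ℂ,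
      DifferentiableOn ℂ f Ω ∧ ¬ HasHolomorphicExtension f W D := by
    obtain ⟨l, hDU⟩ := hWD.exists_not_subset_of_connectedComponentIn
    obtain ⟨c, hcD, hcU⟩ := not_subset.1 hDU
    obtain ⟨f, hf, hfc⟩ := hU l c hcU
    exact ⟨f, hf.mono (hΩU l), fun hext => hfc <|
      (extendsHolomorphicallyTo_iff_exists_isCrossingPair hcU).2
        ⟨W, D, hWD.of_subset (hΩU l) hDU, hcD, hext⟩⟩
  obtain ⟨f, hf, hfext⟩ := exists_forall_not_hasHolomorphicExtension hΩ hpair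
  refine ⟨hΩ, isConnected_connectedComponentIn_iff.2 hx, f, hf, fun a ha hext => ?_⟩
  obtain ⟨W, D, hWD, -, h⟩ := (extendsHolomorphicallyTo_iff_exists_isCrossingPair ha).1 hext
  exact hfext W D hWD h

/-- Any connected component `U` of the interior of an intersection of a family of domains of
holomorphy is a domain of holomorphy. -/
theorem component_of_interior_iInter_isDomainOfHolomorphy {n : ℕ} {ι : Type*}
    (U : ι → Set (Fin n → ℂ)) (hU : ∀ l, IsDomainOfHolomorphy (U l))
    (x : Fin n → ℂ) (hx : x ∈ interior (⋂ l, U l)) :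
    IsDomainOfHolomorphy (connectedComponentIn (interior (⋂ l, U l)) x) :=
  component_of_interior_iInter_isDomainOfHolomorphy_general U
    (fun l a ha => let ⟨f, hf, hfU⟩ := (hU l).2.2; ⟨f, hf, hfU a ha⟩) x hx
end

section
/- Let U ⊆ ℂⁿ be a domain of holomorphy and φ : U → ℂⁿ a biholomorphic mapping onto its (open) image. Then φ(U) is a domain of holomorphy. -/
open Set Metric Filter Topology

/-!
Let `f` be a function on `U` that extends to no point outside `U`. Its transport `f ∘ ψ` may still
extend beyond `φ(U)`, in case `ψ` does and degenerates there. Consider instead the vector-valued map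
`H = (ψ, f ∘ ψ, φ' ∘ ψ)` on `φ(U)`, and suppose that its germ at some point extends to `(P, G, A)`
on a ball `B`. By the identity theorem `A ∘ P' = id` on `B`, so `P` is locally biholomorphic.
Therefore `P` cannot leave `U`: at a first exit point `p`, the function `G ∘ P⁻¹` would extend `f`
to `P p ∉ U`. Now `φ ∘ P = id` on `B` by the identity theorem, hence `B ⊆ φ(U)`. So `H` extends to
no ball that leaves `φ(U)`.

For each such ball, the linear functionals `l` for which `l ∘ H` extends to it form a proper
subspace. Balls with rational radii and centres in a countable dense set detect all extensions, so
by Baire's theorem there is a single `l` for which `l ∘ H` extends to no point outside `φ(U)`.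
-/

lemma exists_forall_notMem_submodule {R M ι : Type*} [Ring R] [TopologicalSpace R]
    [NeBot (𝓝[{x : R | IsUnit x}] 0)] [AddCommGroup M] [Module R M] [TopologicalSpace M]
    [BaireSpace M] [ContinuousAdd M] [ContinuousSMul R M] [Countable ι]
    {p : ι → Submodule R M} (hclosed : ∀ i, IsClosed (p i : Set M)) (hp : ∀ i, p i ≠ ⊤) :
    ∃ v, ∀ i, v ∉ p i := by
  by_contra! hcover
  obtain ⟨i, hi⟩ := nonempty_interior_of_iUnion_of_closed hclosed
    (iUnion_eq_univ_iff.2 hcover)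
  exact hp i ((p i).eq_top_of_nonempty_interior' hi)

lemma exists_mem_closure_connectedComponentIn {X : Type*} [TopologicalSpace X]
    [LocallyConnectedSpace X] {V S : Set X} {x : X} (hV : IsOpen V) (hVc : IsPreconnected V)
    (hS : IsOpen S) (hx : x ∈ V ∩ S) (hVS : ¬ V ⊆ S) :
    ∃ p ∈ V \ S, p ∈ closure (connectedComponentIn (V ∩ S) x) := by
  by_contra! hcon
  have hopen : ∀ y, IsOpen (connectedComponentIn (V ∩ S) y) := fun y =>
    (hV.inter hS).connectedComponentIn
  refine hVS ((hVc.subset_of_closure_inter_subset (hopen x)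
    ⟨x, hx.1, mem_connectedComponentIn hx⟩ ?_).trans
      ((connectedComponentIn_subset _ _).trans inter_subset_right))
  rintro p ⟨hp, hpV⟩
  have hpS : p ∈ S := by_contra fun hpS => hcon p ⟨hpV, hpS⟩ hp
  have hpp := mem_connectedComponentIn (F := V ∩ S) ⟨hpV, hpS⟩
  obtain ⟨y, hyp, hyx⟩ := mem_closure_iff.1 hp _ (hopen p) hpp
  rwa [connectedComponentIn_eq hyx, ← connectedComponentIn_eq hyp]

section
variable {𝕜 : Type*} [NontriviallyNormedField 𝕜] [CompleteSpace 𝕜]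
  {E F G : Type*} [NormedAddCommGroup E] [NormedSpace 𝕜 E] [FiniteDimensional 𝕜 E]
  [NormedAddCommGroup F] [NormedSpace 𝕜 F] [NormedAddCommGroup G] [NormedSpace 𝕜 G]

lemma differentiableOn_clm_of_forall_apply {T : G → E →L[𝕜] F} {s : Set G}
    (hT : ∀ v, DifferentiableOn 𝕜 (fun z => T z v) s) : DifferentiableOn 𝕜 T s := by
  let b := Module.finBasis 𝕜 E
  have hsum : T = fun z => ∑ i, ContinuousLinearMap.smulRightL 𝕜 E F
      (b.coord i).toContinuousLinearMap (T z (b i)) := by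
    funext z
    refine ContinuousLinearMap.coe_injective (b.ext fun j => ?_)
    simp [Finsupp.single_apply]
  rw [hsum]
  exact DifferentiableOn.fun_sum fun i _ =>
    (ContinuousLinearMap.differentiable _).comp_differentiableOn (hT (b i))

lemma isInvertible_of_comp_eq_id {S T : E →L[𝕜] E}
    (h : S.comp T = ContinuousLinearMap.id 𝕜 E) : T.IsInvertible := by
  have hinj : Function.Injective T := Function.LeftInverse.injective (DFunLike.congr_fun h)
  exact ⟨(LinearEquiv.ofInjectiveEndo (T : E →ₗ[𝕜] E) hinj).toContinuousLinearEquiv, rfl⟩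

end

variable {E F : Type*} [NormedAddCommGroup E] [NormedSpace ℂ E]
  [NormedAddCommGroup F] [NormedSpace ℂ F]

lemma norm_sub_sub_fderiv_le_of_mapsTo_ball {f : E → F} {c z : E} {R M : ℝ}
    (hf : DifferentiableOn ℂ f (ball c R)) (hM : MapsTo f (ball c R) (closedBall (f c) M))
    (hz : z ∈ ball c R) :
    ‖f z - f c - fderiv ℂ f c (z - c)‖ ≤ 2 * M * (‖z - c‖ / R) ^ 2 := by
  have hR : 0 < R := nonempty_ball.1 ⟨z, hz⟩
  have hc : ball c R ∈ 𝓝 c := ball_mem_nhds c hR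
  let g : E → F := fun w => f w - f c - fderiv ℂ f c (w - c)
  have hgc : g c = 0 := by simp [g]
  have hg : DifferentiableOn ℂ g (ball c R) := by fun_prop
  have hgM : MapsTo g (ball c R) (closedBall (g c) (2 * M)) := by
    intro w hw
    rw [hgc, mem_closedBall_zero_iff]
    have hlin : ‖fderiv ℂ f c (w - c)‖ ≤ M / R * R :=
      (fderiv ℂ f c).le_of_opNorm_le_of_le
        (Complex.norm_fderiv_le_div_of_mapsTo_ball hf hM hR) (mem_ball_iff_norm.1 hw).le
    calc ‖f w - f c - fderiv ℂ f c (w - c)‖ ≤ ‖f w - f c‖ + ‖fderiv ℂ f c (w - c)‖ :=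
          norm_sub_le _ _
      _ ≤ M + M / R * R := add_le_add (mem_closedBall_iff_norm.1 (hM hw)) hlin
      _ = 2 * M := by rw [div_mul_cancel₀ _ hR.ne']; ring
  have hgo : (g · - g c) =o[𝓝 c] (fun w => ‖w - c‖ ^ 1) := by
    simpa [hgc, g] using (hf.hasFDerivAt hc).isLittleO.norm_right
  simpa [hgc, g, dist_eq_norm] using
    Complex.dist_le_mul_div_pow_of_mapsTo_ball_of_isLittleO hg hgM hgo hz

lemma uniformCauchySeqOn_fderiv_s11 {ι : Type*} {l : Filter ι} {f : ι → E → F} {s t : Set E} {δ : ℝ}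
    (hδ : 0 < δ) (hts : ∀ x ∈ t, ball x δ ⊆ s) (hd : ∀ᶠ n in l, DifferentiableOn ℂ (f n) s)
    (hf : UniformCauchySeqOn f l s) :
    UniformCauchySeqOn (fun n => fderiv ℂ (f n)) l t := by
  intro u hu
  obtain ⟨ε, hε, hεu⟩ := Metric.mem_uniformity_dist.1 hu
  have hclose := hf _ (Metric.dist_mem_uniformity (show 0 < ε * δ / 3 by positivity))
  filter_upwards [hclose, hd.prod_mk hd] with ⟨m, n⟩ hmn ⟨hm, hn⟩ x hx
  have hxs := hts x hx
  have hmaps : MapsTo (f m - f n) (ball x δ) (closedBall ((f m - f n) x) (2 * (ε * δ / 3))) := by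
    intro z hz
    have hz' : ‖f m z - f n z‖ < ε * δ / 3 := by
      simpa [dist_eq_norm] using hmn z (hxs hz)
    have hx' : ‖f m x - f n x‖ < ε * δ / 3 := by
      simpa [dist_eq_norm] using hmn x (hxs (mem_ball_self hδ))
    rw [mem_closedBall_iff_norm, two_mul]
    exact (norm_sub_le _ _).trans (add_le_add hz'.le hx'.le)
  have hmem : ball x δ ∈ 𝓝 x := ball_mem_nhds x hδ
  have hle := Complex.norm_fderiv_le_div_of_mapsTo_ball ((hm.mono hxs).sub (hn.mono hxs)) hmaps hδ
  rw [fderiv_sub ((hm.mono hxs).differentiableAt hmem) ((hn.mono hxs).differentiableAt hmem),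
    ← dist_eq_norm] at hle
  apply hεu
  calc dist (fderiv ℂ (f m) x) (fderiv ℂ (f n) x) ≤ 2 * (ε * δ / 3) / δ := hle
    _ = 2 / 3 * ε := by field_simp
    _ < ε := by linarith

lemma differentiableOn_of_tendstoUniformlyOn [CompleteSpace F] {ι : Type*} {l : Filter ι}
    [l.NeBot] {f : ι → E → F} {g : E → F} {s : Set E} (hs : IsOpen s)
    (hd : ∀ᶠ n in l, DifferentiableOn ℂ (f n) s) (hf : TendstoUniformlyOn f g l s) :
    DifferentiableOn ℂ g s := by
  intro c hc
  obtain ⟨r, hr, hrs⟩ := Metric.isOpen_iff.1 hs c hc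
  have hhalf : ∀ x ∈ ball c (r / 2), ball x (r / 2) ⊆ s := fun x hx =>
    (ball_subset_ball' (by linarith [mem_ball.1 hx])).trans hrs
  have hcauchy := uniformCauchySeqOn_fderiv_s11 (half_pos hr) hhalf hd hf.uniformCauchySeqOn
  have hlim : ∀ x ∈ ball c (r / 2), ∃ L, Tendsto (fun n => fderiv ℂ (f n) x) l (𝓝 L) :=
    fun x hx => cauchy_map_iff_exists_tendsto.1 (hcauchy.cauchy_map hx)
  choose! g' hg' using hlim
  have hball : ball c (r / 2) ∈ 𝓝 c := ball_mem_nhds c (half_pos hr)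
  refine (hasFDerivAt_of_tendstoUniformlyOnFilter (l := l) (f := f) (g' := g')
    ((hcauchy.tendstoUniformlyOn_of_tendsto hg').tendstoUniformlyOnFilter.mono_right
      (le_principal_iff.2 hball)) ?_ ?_).differentiableAt.differentiableWithinAt
  · filter_upwards [hd.prod_mk (hs.eventually_mem hc)] with ⟨n, x⟩ ⟨hn, hx⟩
    exact hn.hasFDerivAt (hs.mem_nhds hx)
  · filter_upwards [hs.eventually_mem hc] with x hx using hf.tendsto_at hx

lemma norm_slope_sub_fderiv_le {f : E → F} {z v : E} {t : ℂ} {R M : ℝ}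
    (hf : DifferentiableOn ℂ f (ball z R)) (hM : MapsTo f (ball z R) (closedBall (f z) M))
    (ht : t ≠ 0) (htv : ‖t • v‖ < R) :
    ‖t⁻¹ • (f (z + t • v) - f z) - fderiv ℂ f z v‖ ≤ 2 * M * (‖v‖ / R) ^ 2 * ‖t‖ := by
  have hle := norm_sub_sub_fderiv_le_of_mapsTo_ball hf hM (z := z + t • v) (by simpa using htv)
  have ht' : ‖t‖ ≠ 0 := norm_ne_zero_iff.2 ht
  have hfactor : t⁻¹ • (f (z + t • v) - f z) - fderiv ℂ f z v
      = t⁻¹ • (f (z + t • v) - f z - fderiv ℂ f z (z + t • v - z)) := by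
    rw [add_sub_cancel_left, map_smul, smul_sub _ (_ - _), inv_smul_smul₀ ht]
  calc ‖t⁻¹ • (f (z + t • v) - f z) - fderiv ℂ f z v‖
      = ‖t‖⁻¹ * ‖f (z + t • v) - f z - fderiv ℂ f z (z + t • v - z)‖ := by
        rw [hfactor, norm_smul, norm_inv]
    _ ≤ ‖t‖⁻¹ * (2 * M * (‖z + t • v - z‖ / R) ^ 2) := by gcongr
    _ = 2 * M * (‖v‖ / R) ^ 2 * ‖t‖ := by
        rw [add_sub_cancel_left, norm_smul]; field_simp

lemma differentiableOn_fderiv_apply [CompleteSpace F] {f : E → F} {s : Set E} (hs : IsOpen s)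
    (hf : DifferentiableOn ℂ f s) (v : E) : DifferentiableOn ℂ (fun z => fderiv ℂ f z v) s := by
  intro x hx
  have hbdd : ∀ᶠ z in 𝓝 x, z ∈ s ∧ f z ∈ ball (f x) 1 :=
    (hs.eventually_mem hx).and
      ((hf.continuousOn.continuousAt (hs.mem_nhds hx)).eventually (ball_mem_nhds _ one_pos))
  obtain ⟨r, hr, hball⟩ := Metric.eventually_nhds_iff_ball.1 hbdd
  obtain ⟨R, hR, rfl⟩ : ∃ R > 0, r = R + R := ⟨r / 2, half_pos hr, (add_halves r).symm⟩
  have hsub : ∀ z ∈ ball x R, ball z R ⊆ ball x (R + R) := fun z hz =>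
    ball_subset_ball' (by linarith [mem_ball.1 hz])
  have hd : DifferentiableOn ℂ f (ball x (R + R)) := hf.mono fun z hz => (hball z hz).1
  have hmaps : ∀ z ∈ ball x R, MapsTo f (ball z R) (closedBall (f z) 2) := fun z hz w hw =>
    mem_closedBall.2 <| by
      linarith [dist_triangle_right (f w) (f z) (f x), mem_ball.1 (hball w (hsub z hz hw)).2,
        mem_ball.1 (hball z (hsub z hz (mem_ball_self hR))).2]
  have hsmall : ∀ᶠ t in 𝓝[≠] (0 : ℂ), ‖t • v‖ < R :=
    ((by fun_prop : Continuous fun t : ℂ => ‖t • v‖).tendsto' 0 0 (by simp)).mono_left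
      nhdsWithin_le_nhds |>.eventually_lt_const hR
  have hunif : TendstoUniformlyOn (fun (t : ℂ) z => t⁻¹ • (f (z + t • v) - f z))
      (fun z => fderiv ℂ f z v) (𝓝[≠] 0) (ball x R) := by
    have hbound : Tendsto (fun t : ℂ => 2 * 2 * (‖v‖ / R) ^ 2 * ‖t‖) (𝓝[≠] 0) (𝓝 0) :=
      ((by fun_prop : Continuous fun t : ℂ => 2 * 2 * (‖v‖ / R) ^ 2 * ‖t‖).tendsto' 0 0
        (by simp)).mono_left nhdsWithin_le_nhds
    rw [Metric.tendstoUniformlyOn_iff]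
    intro ε hε
    filter_upwards [hbound.eventually_lt_const hε, hsmall, self_mem_nhdsWithin]
      with t htε htv ht z hz
    rw [dist_comm, dist_eq_norm]
    exact (norm_slope_sub_fderiv_le (hd.mono (hsub z hz)) (hmaps z hz) ht htv).trans_lt htε
  have hslope : ∀ᶠ t in 𝓝[≠] (0 : ℂ),
      DifferentiableOn ℂ (fun z => t⁻¹ • (f (z + t • v) - f z)) (ball x R) := by
    filter_upwards [hsmall] with t ht
    have hshift : MapsTo (· + t • v) (ball x R) (ball x (R + R)) := fun z hz =>
      hsub z hz (by simpa using ht)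
    exact ((hd.comp (by fun_prop) hshift).sub
      (hd.mono (ball_subset_ball (by linarith)))).const_smul _
  exact (differentiableOn_of_tendstoUniformlyOn isOpen_ball hslope hunif).differentiableAt
    (ball_mem_nhds x hR) |>.differentiableWithinAt

lemma differentiableOn_fderiv [FiniteDimensional ℂ E] [CompleteSpace F] {f : E → F} {s : Set E}
    (hs : IsOpen s) (hf : DifferentiableOn ℂ f s) : DifferentiableOn ℂ (fderiv ℂ f) s :=
  differentiableOn_clm_of_forall_apply (differentiableOn_fderiv_apply hs hf)

lemma contDiffOn_one_of_differentiableOn [FiniteDimensional ℂ E] [CompleteSpace F] {f : E → F}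
    {s : Set E} (hs : IsOpen s) (hf : DifferentiableOn ℂ f s) : ContDiffOn ℂ 1 f s := by
  rw [← zero_add 1, contDiffOn_succ_iff_fderiv_of_isOpen hs]
  exact ⟨hf, by simp, contDiffOn_zero.2 (differentiableOn_fderiv hs hf).continuousOn⟩

lemma exists_local_inverse_of_isInvertible_fderiv [FiniteDimensional ℂ E] {f : E → F} {p : E}
    (hf : ∀ᶠ x in 𝓝 p, DifferentiableAt ℂ f x) (hp : (fderiv ℂ f p).IsInvertible) :
    ∃ s : F → E, Tendsto s (𝓝 (f p)) (𝓝 p) ∧ (∀ᶠ y in 𝓝 (f p), DifferentiableAt ℂ s y) ∧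
      (∀ᶠ y in 𝓝 (f p), f (s y) = y) ∧ ∀ᶠ x in 𝓝 p, s (f x) = x := by
  have : CompleteSpace E := FiniteDimensional.complete ℂ E
  obtain ⟨e, he⟩ := hp
  have : FiniteDimensional ℂ F := e.toLinearEquiv.finiteDimensional
  have : CompleteSpace F := FiniteDimensional.complete ℂ F
  have hfC : ContDiffAt ℂ 1 f p := by
    obtain ⟨s, hs, hso, hps⟩ := _root_.eventually_nhds_iff.1 hf
    exact (contDiffOn_one_of_differentiableOn hso fun x hx =>
      (hs x hx).differentiableWithinAt).contDiffAt (hso.mem_nhds hps)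
  have hfe : HasFDerivAt f (e : E →L[ℂ] F) p := he ▸ hf.self_of_nhds.hasFDerivAt
  have hstrict := hfC.hasStrictFDerivAt' hfe one_ne_zero
  exact ⟨hfC.localInverse hfe one_ne_zero, hstrict.localInverse_tendsto,
    ((hfC.to_localInverse hfe one_ne_zero).eventually (by simp)).mono fun y hy =>
      hy.differentiableAt one_ne_zero,
    hstrict.eventually_right_inverse, hstrict.eventually_left_inverse⟩

lemma eqOn_of_convex_of_eventuallyEq_s11 [CompleteSpace F] {f g : E → F} {B : Set E} {y : E}
    (hB : IsOpen B) (hBc : Convex ℝ B) (hf : DifferentiableOn ℂ f B) (hg : DifferentiableOn ℂ g B)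
    (hy : y ∈ B) (hfg : f =ᶠ[𝓝 y] g) : EqOn f g B := by
  intro x hx
  let L : ℂ → E := fun t => y + t • (x - y)
  have hL : Differentiable ℂ L := by fun_prop
  have hL0 : L 0 = y := by simp [L]
  have hL1 : L 1 = x := by simp [L]
  have hS : IsOpen (L ⁻¹' B) := hB.preimage hL.continuous
  have hSc : Convex ℝ (L ⁻¹' B) := (hBc.translate_preimage_right y).linear_preimage
    ((LinearMap.toSpanSingleton ℂ E (x - y)).restrictScalars ℝ)
  have hanalytic {h : E → F} (hh : DifferentiableOn ℂ h B) : AnalyticOnNhd ℂ (h ∘ L) (L ⁻¹' B) :=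
    (hh.comp hL.differentiableOn (mapsTo_preimage L B)).analyticOnNhd hS
  have heq : EqOn (f ∘ L) (g ∘ L) (L ⁻¹' B) :=
    (hanalytic hf).eqOn_of_preconnected_of_eventuallyEq (hanalytic hg) hSc.isPreconnected
      (z₀ := 0) (by rwa [mem_preimage, hL0]) ((hL.continuous.tendsto' 0 y hL0).eventually hfg)
  simpa [hL1] using heq (x := 1) (by rwa [mem_preimage, hL1])

lemma eqOn_of_isPreconnected_of_eventuallyEq [CompleteSpace F] {f g : E → F} {V : Set E} {q : E}
    (hV : IsOpen V) (hVc : IsPreconnected V) (hf : DifferentiableOn ℂ f V)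
    (hg : DifferentiableOn ℂ g V) (hq : q ∈ V) (hfg : f =ᶠ[𝓝 q] g) : EqOn f g V := by
  suffices h : V ⊆ {x | f =ᶠ[𝓝 x] g} from fun x hx => (h hx).self_of_nhds
  refine hVc.subset_of_closure_inter_subset isOpen_setOfPred_eventually_nhds ⟨q, hq, hfg⟩ ?_
  rintro p ⟨hp, hpV⟩
  obtain ⟨r, hr, hrV⟩ := Metric.isOpen_iff.1 hV p hpV
  obtain ⟨y, hyr, hy⟩ := mem_closure_iff.1 hp (ball p r) isOpen_ball (mem_ball_self hr)
  exact (eqOn_of_convex_of_eventuallyEq_s11 isOpen_ball (convex_ball p r) (hf.mono hrV) (hg.mono hrV)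
    hyr hy).eventuallyEq_of_mem (ball_mem_nhds p hr)

/-- The germ of `h` at `q` is the germ of a map holomorphic on `B` (which is meant to contain
`q`). For a fixed vector-valued `h`, the functionals `l` such that `l ∘ h` has this property form a
vector space, to which Baire's theorem applies. -/
def GermExtendsTo (h : E → F) (q : E) (B : Set E) : Prop :=
  ∃ g : E → F, DifferentiableOn ℂ g B ∧ g =ᶠ[𝓝 q] h

lemma germExtendsTo_of_forall_clm_comp [FiniteDimensional ℂ F] {H : E → F} {q : E} {B : Set E}
    (h : ∀ l : F →L[ℂ] ℂ, GermExtendsTo (l ∘ H) q B) : GermExtendsTo H q B := by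
  let b := Module.finBasis ℂ F
  choose g hg hgH using fun i => h (b.coord i).toContinuousLinearMap
  refine ⟨fun z => ∑ i, g i z • b i,
    DifferentiableOn.fun_sum fun i _ => (hg i).smul_const (b i), ?_⟩
  filter_upwards [eventually_all.2 hgH] with z hz
  simp [hz]

/-- The continuous functionals whose composition with `H` has a germ at `q` extending to `B`. -/
def germExtensionSubmodule (H : E → F) (q : E) (B : Set E) : Submodule ℂ (F →L[ℂ] ℂ) where
  carrier := {l | GermExtendsTo (l ∘ H) q B}
  zero_mem' := ⟨fun _ => 0, differentiableOn_const 0, .rfl⟩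
  add_mem' := fun ⟨g, hg, hgl⟩ ⟨k, hk, hkm⟩ => ⟨g + k, hg.add hk, hgl.add hkm⟩
  smul_mem' := fun c _ ⟨g, hg, hgl⟩ => ⟨c • g, hg.const_smul c, hgl.const_smul c⟩

lemma exists_clm_forall_not_germExtendsTo [FiniteDimensional ℂ F] {ι : Type*} [Countable ι]
    {H : E → F} {q : ι → E} {B : ι → Set E} (hH : ∀ i, ¬ GermExtendsTo H (q i) (B i)) :
    ∃ l : F →L[ℂ] ℂ, ∀ i, ¬ GermExtendsTo (l ∘ H) (q i) (B i) :=
  exists_forall_notMem_submodule (p := fun i => germExtensionSubmodule H (q i) (B i))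
    (fun _ => Submodule.closed_of_finiteDimensional _)
    fun i htop => hH i (germExtendsTo_of_forall_clm_comp fun _ => Submodule.eq_top_iff'.1 htop _)

section DomainOfHolomorphy

variable {n : ℕ} {U : Set (Fin n → ℂ)} {f : (Fin n → ℂ) → ℂ}

lemma ExtendsHolomorphicallyTo.exists_germExtendsTo_ball {a : Fin n → ℂ} {D : Set (Fin n → ℂ)}
    (hfa : ExtendsHolomorphicallyTo U f a) (hU : IsOpen U) (hf : DifferentiableOn ℂ f U)
    (ha : a ∉ U) (hD : Dense D) :
    ∃ q ∈ D ∩ U, ∃ r : ℚ, (0 : ℝ) < r ∧ ¬ ball q r ⊆ U ∧ GermExtendsTo f q (ball q r) := by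
  obtain ⟨V, hV, hVc, haV, g, hg, W, hW, ⟨x, hxW⟩, hWUV, hfg⟩ := hfa
  have hx : x ∈ V ∩ U := (hWUV hxW).symm
  obtain ⟨p, ⟨hpV, hpU⟩, hpC⟩ := exists_mem_closure_connectedComponentIn hV hVc.isPreconnected hU
    hx fun hVU => ha (hVU haV)
  set C := connectedComponentIn (V ∩ U) x
  have hC : IsOpen C := (hV.inter hU).connectedComponentIn
  have hCVU : C ⊆ V ∩ U := connectedComponentIn_subset _ _
  have hgf : EqOn g f C := eqOn_of_isPreconnected_of_eventuallyEq hC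
    isPreconnected_connectedComponentIn (hg.mono (hCVU.trans inter_subset_left))
    (hf.mono (hCVU.trans inter_subset_right)) (mem_connectedComponentIn hx)
    (hfg.symm.eventuallyEq_of_mem (hW.mem_nhds hxW))
  obtain ⟨ε, hε, hεV⟩ := Metric.isOpen_iff.1 hV p hpV
  obtain ⟨q, hqD, hqp, hqC⟩ := hD.exists_mem_open (isOpen_ball.inter hC)
    (mem_closure_iff.1 hpC (ball p (ε / 3)) isOpen_ball (mem_ball_self (by positivity)))
  obtain ⟨r, hr, hr'⟩ := exists_rat_btwn (show ε / 3 < ε / 2 by linarith)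
  rw [mem_ball] at hqp
  refine ⟨q, ⟨hqD, (hCVU hqC).2⟩, r, by linarith,
    fun hball => hpU (hball (mem_ball'.2 (hqp.trans hr))), g, ?_,
    hgf.eventuallyEq_of_mem (hC.mem_nhds hqC)⟩
  exact hg.mono ((ball_subset_ball' (by linarith)).trans hεV)

lemma isDomainOfHolomorphy_of_forall_germExtendsTo [FiniteDimensional ℂ F] {H : (Fin n → ℂ) → F}
    (hU : IsOpen U) (hUc : IsConnected U) (hH : DifferentiableOn ℂ H U)
    (hball : ∀ q ∈ U, ∀ r > 0, GermExtendsTo H q (ball q r) → ball q r ⊆ U) :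
    IsDomainOfHolomorphy U := by
  obtain ⟨D, hDcount, hD⟩ := TopologicalSpace.exists_countable_dense (Fin n → ℂ)
  have := hDcount.to_subtype
  let ι := {x : D × ℚ // (x.1 : Fin n → ℂ) ∈ U ∧ (0 : ℝ) < x.2 ∧
    ¬ ball (x.1 : Fin n → ℂ) x.2 ⊆ U}
  obtain ⟨l, hl⟩ := exists_clm_forall_not_germExtendsTo (ι := ι) (H := H) (q := fun i => i.1.1)
    (B := fun i => ball i.1.1 i.1.2)
    fun ⟨_, hqU, hr, hnot⟩ hext => hnot (hball _ hqU _ hr hext)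
  have hlH : DifferentiableOn ℂ (l ∘ H) U := l.differentiable.comp_differentiableOn hH
  refine ⟨hU, hUc, l ∘ H, hlH, fun a ha hext => ?_⟩
  obtain ⟨q, ⟨hqD, hqU⟩, r, hr, hnot, hgerm⟩ := hext.exists_germExtendsTo_ball hU hlH ha hD
  exact hl ⟨(⟨q, hqD⟩, r), hqU, hr, hnot⟩ hgerm

variable [FiniteDimensional ℂ E] {P : E → Fin n → ℂ} {G : E → ℂ} {B : Set E}

lemma extendsHolomorphicallyTo_of_isInvertible_fderiv {C : Set E} {p : E} (hB : IsOpen B)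
    (hP : DifferentiableOn ℂ P B) (hG : DifferentiableOn ℂ G B) (hpB : p ∈ B)
    (hP' : (fderiv ℂ P p).IsInvertible) (hC : IsOpen C) (hpC : p ∈ closure C)
    (hCU : MapsTo P C U) (hGC : EqOn G (f ∘ P) C) : ExtendsHolomorphicallyTo U f (P p) := by
  obtain ⟨s, hs, hsd, hPs, hsP⟩ := exists_local_inverse_of_isInvertible_fderiv
    (hP.eventually_differentiableAt (hB.mem_nhds hpB)) hP'
  obtain ⟨δ, hδ, hV⟩ := Metric.eventually_nhds_iff_ball.1
    (hsd.and (hPs.and (hs.eventually (hB.mem_nhds hpB))))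
  have hsV : DifferentiableOn ℂ s (ball (P p) δ) := fun y hy =>
    (hV y hy).1.differentiableWithinAt
  refine ⟨ball (P p) δ, isOpen_ball, (convex_ball _ _).isConnected ⟨_, mem_ball_self hδ⟩,
    mem_ball_self hδ, G ∘ s, hG.comp hsV fun y hy => (hV y hy).2.2,
    ball (P p) δ ∩ s ⁻¹' C, hsV.continuousOn.isOpen_inter_preimage isOpen_ball hC, ?_, ?_, ?_⟩
  · have hPp : ∀ᶠ x in 𝓝 p, P x ∈ ball (P p) δ :=
      (hP.continuousOn.continuousAt (hB.mem_nhds hpB)).eventually (ball_mem_nhds _ hδ)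
    obtain ⟨x, hxC, hsx, hxV⟩ :=
      ((mem_closure_iff_frequently.1 hpC).and_eventually (hsP.and hPp)).exists
    exact ⟨P x, hxV, by rwa [mem_preimage, hsx]⟩
  · rintro y ⟨hy, hyC⟩
    exact ⟨(hV y hy).2.1 ▸ hCU hyC, hy⟩
  · rintro y ⟨hy, hyC⟩
    simpa [(hV y hy).2.1] using (hGC hyC).symm

lemma mapsTo_of_forall_not_extendsHolomorphicallyTo {q : E} (hU : IsOpen U)
    (hf : DifferentiableOn ℂ f U) (hext : ∀ a ∈ Uᶜ, ¬ ExtendsHolomorphicallyTo U f a)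
    (hB : IsOpen B) (hBc : IsPreconnected B) (hP : DifferentiableOn ℂ P B)
    (hP' : ∀ w ∈ B, (fderiv ℂ P w).IsInvertible) (hG : DifferentiableOn ℂ G B)
    (hq : q ∈ B) (hPq : P q ∈ U) (hGq : G =ᶠ[𝓝 q] f ∘ P) : MapsTo P B U := by
  let S := B ∩ P ⁻¹' U
  have hS : IsOpen S := hP.continuousOn.isOpen_inter_preimage hB hU
  have hqS : q ∈ B ∩ S := ⟨hq, hq, hPq⟩
  suffices hBS : B ⊆ S from fun w hw => (hBS hw).2
  by_contra hBS
  obtain ⟨p, ⟨hpB, hpS⟩, hpC⟩ := exists_mem_closure_connectedComponentIn hB hBc hS hqS hBS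
  set C := connectedComponentIn (B ∩ S) q
  have hC : IsOpen C := (hB.inter hS).connectedComponentIn
  have hCS : C ⊆ B ∩ S := connectedComponentIn_subset _ _
  have hCB : C ⊆ B := hCS.trans inter_subset_left
  have hCU : MapsTo P C U := fun w hw => (hCS hw).2.2
  have hGC : EqOn G (f ∘ P) C := eqOn_of_isPreconnected_of_eventuallyEq hC
    isPreconnected_connectedComponentIn (hG.mono hCB) (hf.comp (hP.mono hCB) hCU)
    (mem_connectedComponentIn hqS) hGq
  exact hext (P p) (fun hpU => hpS ⟨hpB, hpU⟩)
    (extendsHolomorphicallyTo_of_isInvertible_fderiv hB hP hG hpB (hP' p hpB) hC hpC hCU hGC)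

end DomainOfHolomorphy

lemma eqOn_clm_comp_fderiv_id [FiniteDimensional ℂ E] [CompleteSpace F] {P ψ : E → F} {φ : F → E}
    {A : E → F →L[ℂ] E} {B : Set E} {q : E} (hB : IsOpen B) (hBc : IsPreconnected B)
    (hP : DifferentiableOn ℂ P B) (hA : DifferentiableOn ℂ A B) (hq : q ∈ B) (hPq : P =ᶠ[𝓝 q] ψ)
    (hAq : A =ᶠ[𝓝 q] fun w => fderiv ℂ φ (ψ w)) (hψ : ∀ᶠ w in 𝓝 q, DifferentiableAt ℂ ψ w)
    (hφ : ∀ᶠ w in 𝓝 q, DifferentiableAt ℂ φ (ψ w)) (hφψ : φ ∘ ψ =ᶠ[𝓝 q] id) :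
    EqOn (fun w => (A w).comp (fderiv ℂ P w)) (fun _ => ContinuousLinearMap.id ℂ E) B := by
  have : CompleteSpace E := FiniteDimensional.complete ℂ E
  refine eqOn_of_isPreconnected_of_eventuallyEq hB hBc
    (hA.clm_comp (differentiableOn_fderiv hB hP)) (differentiableOn_const _) hq ?_
  filter_upwards [hAq, hPq.fderiv (𝕜 := ℂ), hψ, hφ, hφψ.eventuallyEq_nhds]
    with w hAw hPw hψw hφw hφψw
  rw [hAw, hPw, ← fderiv_comp w hφw hψw, hφψw.fderiv_eq, fderiv_id]

lemma surjOn_of_germExtendsTo {n : ℕ} {U V : Set (Fin n → ℂ)} {f : (Fin n → ℂ) → ℂ}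
    {φ ψ : (Fin n → ℂ) → Fin n → ℂ} {B : Set (Fin n → ℂ)} {q : Fin n → ℂ} (hU : IsOpen U)
    (hf : DifferentiableOn ℂ f U) (hext : ∀ a ∈ Uᶜ, ¬ ExtendsHolomorphicallyTo U f a)
    (hφ : DifferentiableOn ℂ φ U) (hV : IsOpen V) (hψ : DifferentiableOn ℂ ψ V)
    (hψU : MapsTo ψ V U) (hφψ : RightInvOn ψ φ V) (hB : IsOpen B) (hBc : IsPreconnected B)
    (hqB : q ∈ B) (hqV : q ∈ V)
    (hgerm : GermExtendsTo (fun w => (ψ w, f (ψ w), fderiv ℂ φ (ψ w))) q B) : SurjOn φ U B := by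
  obtain ⟨K, hK, hKq⟩ := hgerm
  let P := fun w => (K w).1
  let G := fun w => (K w).2.1
  let A := fun w => (K w).2.2
  have hP : DifferentiableOn ℂ P B := hK.fst
  have hPq : P =ᶠ[𝓝 q] ψ := hKq.fun_comp Prod.fst
  have hGq : G =ᶠ[𝓝 q] f ∘ P := by
    filter_upwards [hKq] with w hw using by simp [G, P, hw]
  have hAq : A =ᶠ[𝓝 q] fun w => fderiv ℂ φ (ψ w) := hKq.fun_comp fun k => k.2.2
  have hVq : V ∈ 𝓝 q := hV.mem_nhds hqV
  have hφψq : φ ∘ ψ =ᶠ[𝓝 q] id := eventually_of_mem hVq hφψ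
  have hAP : EqOn (fun w => (A w).comp (fderiv ℂ P w)) (fun _ => .id ℂ (Fin n → ℂ)) B :=
    eqOn_clm_comp_fderiv_id hB hBc hP hK.snd.snd hqB hPq hAq
      (hψ.eventually_differentiableAt hVq)
      (eventually_of_mem hVq fun w hw => hφ.differentiableAt (hU.mem_nhds (hψU hw))) hφψq
  have hPqU : P q ∈ U := by
    rw [hPq.self_of_nhds]
    exact hψU hqV
  have hPU : MapsTo P B U :=
    mapsTo_of_forall_not_extendsHolomorphicallyTo hU hf hext hB hBc hP
      (fun w hw => isInvertible_of_comp_eq_id (hAP hw)) hK.snd.fst hqB hPqU hGq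
  have hφP : EqOn (φ ∘ P) id B :=
    eqOn_of_isPreconnected_of_eventuallyEq hB hBc (hφ.comp hP hPU) differentiableOn_id hqB
      ((hPq.fun_comp φ).trans hφψq)
  exact fun w hw => ⟨P w, hPU hw, hφP hw⟩

/-- The image of a domain of holomorphy under a biholomorphic map (an injective holomorphic map
with open image and holomorphic inverse) is a domain of holomorphy. -/
theorem biholomorphic_image_isDomainOfHolomorphy {n : ℕ} (U : Set (Fin n → ℂ))
    (hU : IsDomainOfHolomorphy U)
    (φ : (Fin n → ℂ) → (Fin n → ℂ)) (hφ : DifferentiableOn ℂ φ U)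
    (hinj : Set.InjOn φ U) (hopen : IsOpen (φ '' U))
    (ψ : (Fin n → ℂ) → (Fin n → ℂ)) (hψ : DifferentiableOn ℂ ψ (φ '' U))
    (hinv : ∀ z ∈ U, ψ (φ z) = z) :
    IsDomainOfHolomorphy (φ '' U) := by
  obtain ⟨hUopen, hUconn, f, hf, hext⟩ := hU
  have hleft : LeftInvOn ψ φ U := hinv
  have hψU : MapsTo ψ (φ '' U) U := hleft.mapsTo (surjOn_image φ U)
  have hφ' : DifferentiableOn ℂ (fderiv ℂ φ) U := differentiableOn_fderiv hUopen hφ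
  have hH : DifferentiableOn ℂ (fun w => (ψ w, f (ψ w), fderiv ℂ φ (ψ w))) (φ '' U) :=
    hψ.prodMk ((hf.comp hψ hψU).prodMk (hφ'.comp hψ hψU))
  refine isDomainOfHolomorphy_of_forall_germExtendsTo hopen (hUconn.image φ hφ.continuousOn) hH ?_
  exact fun q hq r hr => surjOn_of_germExtendsTo hUopen hf hext hφ hopen hψ hψU
    hleft.rightInvOn_image isOpen_ball (convex_ball q r).isPreconnected (mem_ball_self hr) hq
end
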